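/- Under the twisted dual equivalence moves d̃_i on permutations, two permutations w and u of {1,...,n} are connected by a sequence of moves d̃_{i_1},...,d̃_{i_k} if and only if inv(w) = inv(u) and [w_1 > w_n ⟺ u_1 > u_n]. -/

import Mathlib

/-!  Permutations of `{1,…,n}` are modelled as `Equiv.Perm (Fin n)` with 0-based
values: the value `v : Fin n` stands for the paper's value `v+1`, and
`w.symm v` is the position of the value `v` in one-line notation.
`dmove n i` is the paper's elementary dual equivalence involution `d_{i+1}`
(so `i` ranges over `1 ≤ i` and `i + 1 < n`, matching the paper's `1 < i+1 < n`),
and `dtmove n i` is the twisted move `d̃_{i+1}`. -/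

/-- Haiman's elementary dual equivalence move: if the position of the middle
value `i` lies between the positions of `i-1` and `i+1`, do nothing; otherwise
interchange the value `i` with whichever of `i-1, i+1` is positioned further
from it. -/
def dmove (n : ℕ) (i : ℕ) (w : Equiv.Perm (Fin n)) : Equiv.Perm (Fin n) :=
  if h : 1 ≤ i ∧ i + 1 < n then
    let a : Fin n := ⟨i - 1, by omega⟩
    let b : Fin n := ⟨i, by omega⟩
    let c : Fin n := ⟨i + 1, by omega⟩
    let pa := w.symm a
    let pb := w.symm b
    let pc := w.symm c
    if (pa < pb ∧ pb < pc) ∨ (pc < pb ∧ pb < pa) then w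
    else if pb < pa ∧ pb < pc then
      (if pa < pc then Equiv.swap c b else Equiv.swap a b) * w
    else
      (if pa < pc then Equiv.swap a b else Equiv.swap c b) * w
  else w

/-- The twisted elementary dual equivalence move: if the position of the middle
value `i` lies between those of `i-1` and `i+1`, do nothing; otherwise
cyclically rotate the three values `i-1, i, i+1` so that `i` moves to the
other side of `i-1` and `i+1`, the outer two keeping their relative order. -/
def dtmove (n : ℕ) (i : ℕ) (w : Equiv.Perm (Fin n)) : Equiv.Perm (Fin n) :=
  if h : 1 ≤ i ∧ i + 1 < n then
    let a : Fin n := ⟨i - 1, by omega⟩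
    let b : Fin n := ⟨i, by omega⟩
    let c : Fin n := ⟨i + 1, by omega⟩
    let pa := w.symm a
    let pb := w.symm b
    let pc := w.symm c
    let u := if pa < pc then a else c   -- the outer value occurring first
    let v := if pa < pc then c else a   -- the outer value occurring last
    if (pa < pb ∧ pb < pc) ∨ (pc < pb ∧ pb < pa) then w
    else if pb < pa ∧ pb < pc then
      (Equiv.swap b u * Equiv.swap u v) * w
    else
      (Equiv.swap u b * Equiv.swap b v) * w
  else w

/-- The inverse descent signature: `sig n w j = +1` if the (0-based) value `j`
occurs to the left of the value `j+1` in the one-line notation of `w`, and `-1`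
otherwise.  (`sig n w (j-1)` is the paper's `σ(w)_j`.) -/
def sig (n : ℕ) (w : Equiv.Perm (Fin n)) (j : ℕ) : ℤ :=
  if h : j + 1 < n then
    if w.symm ⟨j, by omega⟩ < w.symm ⟨j + 1, h⟩ then 1 else -1
  else 1

/-- The number of inversions of a permutation of `Fin n`. -/
def linv (n : ℕ) (w : Equiv.Perm (Fin n)) : ℕ :=
  ((Finset.univ : Finset (Fin n × Fin n)).filter
    (fun pq => pq.1 < pq.2 ∧ w pq.2 < w pq.1)).card


/-- Inversions of a word. -/
def fInv : List ℕ → ℕ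
  | [] => 0
  | x :: l => l.countP (fun y => decide (y < x)) + fInv l

/-- One forgotten move. -/
inductive FStep : List ℕ → List ℕ → Prop
  | A (x y z : ℕ) (l : List ℕ) : x < y → y < z → FStep (y :: x :: z :: l) (x :: z :: y :: l)
  | B (x y z : ℕ) (l : List ℕ) : x < y → y < z → FStep (z :: x :: y :: l) (y :: z :: x :: l)
  | cons (a : ℕ) {l l' : List ℕ} : FStep l l' → FStep (a :: l) (a :: l')

/-- The forgotten equivalence. -/
abbrev FEq (p q : List ℕ) : Prop := Relation.EqvGen FStep p q

theorem FStep.perm {p q : List ℕ} (h : FStep p q) : p.Perm q := by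
  induction h with
  | A x y z l _ _ =>
    exact (List.Perm.swap x y _).trans ((List.Perm.swap z y _).cons x)
  | B x y z l _ _ =>
    exact ((List.Perm.swap y x _).cons z).trans (List.Perm.swap y z _)
  | cons a _ ih => exact ih.cons a

theorem FStep.inv {p q : List ℕ} (h : FStep p q) : fInv p = fInv q := by
  induction h with
  | A x y z l h1 h2 =>
    have := h1.trans h2
    simp [fInv, List.countP_cons, h1, h2, this, h1.not_gt, h2.not_gt, this.not_gt]; omega
  | B x y z l h1 h2 =>
    have := h1.trans h2
    simp [fInv, List.countP_cons, h1, h2, this, h1.not_gt, h2.not_gt, this.not_gt]; omega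
  | cons a h ih => simp [fInv, ih, h.perm.countP_eq]

theorem FStep.append {p q : List ℕ} (h : FStep p q) (r : List ℕ) : FStep (p ++ r) (q ++ r) := by
  induction h with
  | A x y z l h1 h2 => exact FStep.A x y z _ h1 h2
  | B x y z l h1 h2 => exact FStep.B x y z _ h1 h2
  | cons a h ih => exact ih.cons a

theorem FStep.prepend {p q : List ℕ} (h : FStep p q) (r : List ℕ) : FStep (r ++ p) (r ++ q) := by
  induction r with
  | nil => exact h
  | cons a r ih => exact ih.cons a

theorem FStep.reverse {p q : List ℕ} (h : FStep p q) :
    FStep q.reverse p.reverse ∨ FStep p.reverse q.reverse := by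
  induction h with
  | A x y z l h1 h2 =>
    right
    simpa using (FStep.B x y z [] h1 h2).prepend l.reverse
  | B x y z l h1 h2 =>
    right
    simpa using (FStep.A x y z [] h1 h2).prepend l.reverse
  | cons a h ih =>
    rcases ih with ih | ih
    · left; simpa using ih.append [a]
    · right; simpa using ih.append [a]

theorem FEq.refl (p : List ℕ) : FEq p p := Relation.EqvGen.refl p
theorem FEq.symm {p q : List ℕ} (h : FEq p q) : FEq q p := Relation.EqvGen.symm _ _ h
theorem FEq.trans {p q r : List ℕ} (h : FEq p q) (h' : FEq q r) : FEq p r :=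
  Relation.EqvGen.trans _ _ _ h h'
theorem FEq.step {p q : List ℕ} (h : FStep p q) : FEq p q := Relation.EqvGen.rel _ _ h

theorem FEq.perm {p q : List ℕ} (h : FEq p q) : p.Perm q := by
  induction h with
  | rel _ _ h => exact h.perm
  | refl _ => exact List.Perm.refl _
  | symm _ _ _ ih => exact ih.symm
  | trans _ _ _ _ _ ih1 ih2 => exact ih1.trans ih2

theorem FEq.inv {p q : List ℕ} (h : FEq p q) : fInv p = fInv q := by
  induction h with
  | rel _ _ h => exact h.inv
  | refl _ => rfl
  | symm _ _ _ ih => exact ih.symm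
  | trans _ _ _ _ _ ih1 ih2 => exact ih1.trans ih2

theorem FEq.cons (a : ℕ) {p q : List ℕ} (h : FEq p q) : FEq (a :: p) (a :: q) := by
  induction h with
  | rel _ _ h => exact FEq.step (h.cons a)
  | refl _ => exact FEq.refl _
  | symm _ _ _ ih => exact ih.symm
  | trans _ _ _ _ _ ih1 ih2 => exact ih1.trans ih2

theorem FEq.reverse {p q : List ℕ} (h : FEq p q) : FEq p.reverse q.reverse := by
  induction h with
  | rel _ _ h =>
    rcases h.reverse with h | h
    · exact (FEq.step h).symm
    · exact FEq.step h
  | refl _ => exact FEq.refl _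
  | symm _ _ _ ih => exact ih.symm
  | trans _ _ _ _ _ ih1 ih2 => exact ih1.trans ih2

theorem front_aux (m a : ℕ) (hma : m < a) (β : List ℕ) (hm : ∀ x ∈ β, m < x) (ha : a ∉ β)
    (hc : ∃ c ∈ β, a < c) : ∃ d β', a < d ∧ FEq (a :: m :: β) (m :: d :: β') := by
  induction β with
  | nil => simp at hc
  | cons c β ih =>
    by_cases h : a < c
    · exact ⟨c, a :: β, h, FEq.step (FStep.A m a c β hma h)⟩
    · have hca : c < a := by
        have : a ≠ c := by rintro rfl; simp at ha
        omega
      have hmc : m < c := hm c (by simp)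
      obtain ⟨d, β', hd, h1⟩ := ih (fun x hx => hm x (by simp [hx])) (by simp at ha; tauto) (by
        obtain ⟨e, he, hae⟩ := hc
        rcases List.mem_cons.1 he with rfl | he
        · omega
        · exact ⟨e, he, hae⟩)
      refine ⟨d, c :: β', hd, ?_⟩
      exact ((FEq.step (FStep.B m c a β hmc hca)).trans (h1.cons c)).trans
        (FEq.step (FStep.A m c d β' hmc (hca.trans hd)))

theorem to_front (m hi : ℕ) (α β : List ℕ) (hnd : (α ++ m :: β).Nodup)
    (hm : ∀ x ∈ α ++ m :: β, m ≤ x) (hhi : ∀ x ∈ α ++ m :: β, x ≤ hi) (hβ : hi ∈ β) :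
    ∃ β', FEq (α ++ m :: β) (m :: β') := by
  induction α with
  | nil => exact ⟨β, FEq.refl _⟩
  | cons a α ih =>
    rw [List.cons_append] at hnd hm hhi ⊢
    obtain ⟨β', h⟩ := ih (List.nodup_cons.1 hnd).2 (fun x hx => hm x (List.mem_cons_of_mem _ hx))
      (fun x hx => hhi x (List.mem_cons_of_mem _ hx))
    have hp := h.perm
    have hnd' : (a :: m :: β').Nodup := (hp.cons a).nodup_iff.1 hnd
    have hm' : ∀ x ∈ a :: m :: β', m ≤ x := fun x hx => hm x ((hp.cons a).mem_iff.2 hx)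
    have hmhi : hi ≠ m := by
      rintro rfl
      have := (List.nodup_append.1 (List.nodup_cons.1 hnd).2).2.1
      exact (List.nodup_cons.1 this).1 hβ
    have hhi' : hi ∈ β' := by
      have : hi ∈ m :: β' := hp.mem_iff.1 (by simp [hβ])
      rcases List.mem_cons.1 this with h | h
      · exact absurd h hmhi
      · exact h
    simp only [List.nodup_cons, List.mem_cons, not_or] at hnd'
    have h1 : m < a := lt_of_le_of_ne (hm' a (by simp)) (Ne.symm hnd'.1.1)
    obtain ⟨d, β'', -, h2⟩ := front_aux m a h1 β'
      (fun x hx => lt_of_le_of_ne (hm' x (by simp [hx])) (by rintro rfl; exact hnd'.2.1 hx))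
      hnd'.1.2 ⟨hi, hhi', lt_of_le_of_ne (hhi a (by simp)) (by rintro rfl; exact hnd'.1.2 hhi')⟩
    exact ⟨_, (h.cons a).trans h2⟩

theorem sub_front {lo hi : ℕ} {p : List ℕ} (hnd : p.Nodup)
    (hlo : ∀ x ∈ p, lo ≤ x) (hhi : ∀ x ∈ p, x ≤ hi) (hs : [lo, hi].Sublist p) :
    ∃ β, FEq p (lo :: β) ∧ hi ∈ β ∧ p.Perm (lo :: β) := by
  obtain ⟨α, β, rfl, h1, h2⟩ := List.cons_sublist_iff.1 hs
  obtain ⟨s, t, rfl⟩ := List.append_of_mem h1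
  have hmem : hi ∈ t ++ β := List.mem_append_right _ (List.singleton_sublist.1 h2)
  have e : (s ++ lo :: t) ++ β = s ++ lo :: (t ++ β) := by simp
  rw [e] at hnd hlo hhi ⊢
  obtain ⟨γ, h⟩ := to_front lo hi s (t ++ β) hnd hlo hhi hmem
  refine ⟨γ, h, ?_, h.perm⟩
  have hne : hi ≠ lo := by
    rintro rfl
    exact (List.nodup_cons.1 (List.nodup_append.1 hnd).2.1).1 hmem
  have : hi ∈ lo :: γ := h.perm.mem_iff.1 (by
    simp only [List.mem_append, List.mem_cons] at hmem ⊢; tauto)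
  rcases List.mem_cons.1 this with h | h
  · exact absurd h hne
  · exact h

theorem choose_two_succ (r : ℕ) : (r + 1).choose 2 = r + r.choose 2 := by
  rw [Nat.choose_succ_succ' r 1]; simp

theorem fInv_le (p : List ℕ) : fInv p ≤ p.length.choose 2 := by
  induction p with
  | nil => simp [fInv]
  | cons a p ih =>
    have := List.countP_le_length (p := fun y => decide (y < a)) (l := p)
    simp only [fInv, List.length_cons, choose_two_succ]; omega

theorem fInv_append_singleton (p : List ℕ) (a : ℕ) :
    fInv (p ++ [a]) = fInv p + p.countP (fun y => decide (a < y)) := by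
  induction p with
  | nil => simp [fInv]
  | cons b p ih =>
    simp only [List.cons_append, fInv, ih, List.countP_append, List.countP_cons, List.countP_nil]
    omega

theorem fInv_reverse (p : List ℕ) (hnd : p.Nodup) :
    fInv p + fInv p.reverse = p.length.choose 2 := by
  induction p with
  | nil => simp [fInv]
  | cons a p ih =>
    have h := ih (List.nodup_cons.1 hnd).2
    have ha := (List.nodup_cons.1 hnd).1
    rw [List.reverse_cons, fInv_append_singleton, List.length_cons, choose_two_succ, fInv,
      List.countP_reverse]
    have h2 := List.length_eq_countP_add_countP (fun y => decide (y < a)) (l := p)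
    have h3 : p.countP (fun y => decide (a < y)) = p.countP (fun y => ¬ decide (y < a)) := by
      apply List.countP_congr
      intro x hx
      have : x ≠ a := by rintro rfl; exact ha hx
      simp; omega
    rw [h3]; omega

theorem countP_zero {a : ℕ} {p : List ℕ} (h : ∀ x ∈ p, a ≤ x) :
    p.countP (fun y => decide (y < a)) = 0 := by
  rw [List.countP_eq_zero]; intro x hx; simpa using h x hx

theorem countP_full {a : ℕ} {p : List ℕ} (h : ∀ x ∈ p, x < a) :
    p.countP (fun y => decide (y < a)) = p.length := by
  rw [List.countP_eq_length]; intro x hx; simpa using h x hx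

theorem exists_max (p : List ℕ) (h : p ≠ []) (hnd : p.Nodup) :
    ∃ M p', p.Perm (M :: p') ∧ ∀ x ∈ p', x < M := by
  obtain ⟨M, hM, hmax⟩ := p.toFinset.exists_max_image id (by simpa using h)
  have hM' : M ∈ p := by simpa using hM
  have hp := List.perm_cons_erase hM'
  refine ⟨M, p.erase M, hp, fun x hx => ?_⟩
  refine lt_of_le_of_ne (hmax x (by simpa using List.mem_of_mem_erase hx)) ?_
  rintro rfl
  exact (List.Nodup.not_mem_erase hnd) hx

theorem exists_min (p : List ℕ) (h : p ≠ []) (hnd : p.Nodup) :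
    ∃ M p', p.Perm (M :: p') ∧ ∀ x ∈ p', M < x := by
  obtain ⟨M, hM, hmax⟩ := p.toFinset.exists_min_image id (by simpa using h)
  have hM' : M ∈ p := by simpa using hM
  have hp := List.perm_cons_erase hM'
  refine ⟨M, p.erase M, hp, fun x hx => ?_⟩
  refine lt_of_le_of_ne (hmax x (by simpa using List.mem_of_mem_erase hx)) ?_
  rintro rfl
  exact (List.Nodup.not_mem_erase hnd) hx

theorem exists_inv (r : ℕ) : ∀ (R : List ℕ), R.Nodup → R.length = r → ∀ k ≤ r.choose 2,
    ∃ ρ : List ℕ, ρ.Perm R ∧ fInv ρ = k := by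
  induction r with
  | zero =>
    intro R _ hR k hk
    refine ⟨[], ?_, ?_⟩
    · rw [List.length_eq_zero_iff.1 hR]
    · simp at hk; simp [fInv, hk]
  | succ r ih =>
    intro R hnd hR k hk
    have hne : R ≠ [] := by rintro rfl; simp at hR
    rw [choose_two_succ] at hk
    by_cases h : k ≤ r.choose 2
    · obtain ⟨M, p, hp, hM⟩ := exists_min R hne hnd
      have hl : p.length = r := by have := hp.length_eq; simp at this; omega
      obtain ⟨ρ, h1, h2⟩ := ih p (List.nodup_cons.1 (hp.nodup_iff.1 hnd)).2 hl k h
      refine ⟨M :: ρ, (h1.cons M).trans hp.symm, ?_⟩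
      rw [fInv, countP_zero (fun x hx => (hM x (h1.mem_iff.1 hx)).le), h2, zero_add]
    · have hrk : r ≤ k := by
        rcases r with _ | r
        · omega
        · rw [choose_two_succ] at h; rcases r with _ | r
          · simp at h; omega
          · rw [choose_two_succ] at h; omega
      obtain ⟨M, p, hp, hM⟩ := exists_max R hne hnd
      have hl : p.length = r := by have := hp.length_eq; simp at this; omega
      obtain ⟨ρ, h1, h2⟩ := ih p (List.nodup_cons.1 (hp.nodup_iff.1 hnd)).2 hl (k - r) (by omega)
      refine ⟨M :: ρ, (h1.cons M).trans hp.symm, ?_⟩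
      rw [fInv, countP_full (fun x hx => (hM x (h1.mem_iff.1 hx))), h2, h1.length_eq]; omega

/-- The statement of the classification for words of length `n` with `lo` before `hi`. -/
def FClass (n : ℕ) : Prop :=
  ∀ (lo hi : ℕ) (p q : List ℕ), p.length = n → p.Nodup → p.Perm q →
    (∀ x ∈ p, lo ≤ x) → (∀ x ∈ p, x ≤ hi) → [lo, hi].Sublist p → [lo, hi].Sublist q →
    fInv p = fInv q → FEq p q

theorem FClass.rev {n : ℕ} (H : FClass n) (lo hi : ℕ) (p q : List ℕ) (hn : p.length = n)
    (hnd : p.Nodup) (hpq : p.Perm q)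
    (hlo : ∀ x ∈ p, lo ≤ x) (hhi : ∀ x ∈ p, x ≤ hi) (hp : [hi, lo].Sublist p)
    (hq : [hi, lo].Sublist q) (hinv : fInv p = fInv q) : FEq p q := by
  have hq' := hpq.nodup_iff.1 hnd
  have := H lo hi p.reverse q.reverse (by simpa using hn) (by simpa using hnd)
    ((List.reverse_perm p).trans (hpq.trans (List.reverse_perm q).symm))
    (by simpa using hlo) (by simpa using hhi) (by simpa using hp.reverse) (by simpa using hq.reverse)
    (by
      have h1 := fInv_reverse p hnd
      have h2 := fInv_reverse q hq'
      rw [hpq.length_eq] at h1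
      omega)
  simpa using this.reverse

theorem pair_or {a b : ℕ} {p : List ℕ} (ha : a ∈ p) (hb : b ∈ p) (hab : a ≠ b) :
    [a, b].Sublist p ∨ [b, a].Sublist p := by
  obtain ⟨s, t, rfl⟩ := List.append_of_mem ha
  rcases List.mem_append.1 hb with h | h
  · right
    exact (List.singleton_sublist.2 h).append (List.singleton_sublist.2 (List.mem_cons_self ..))
  · left
    have h : b ∈ t := by
      rcases List.mem_cons.1 h with h | h
      · exact absurd h.symm hab
      · exact h
    exact ((List.singleton_sublist.2 h).cons_cons a).trans (List.sublist_append_right _ _)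

theorem bound_lo {lo hi : ℕ} {p : List ℕ} (hnd : p.Nodup)
    (hlo : ∀ x ∈ p, lo ≤ x) (hhi : ∀ x ∈ p, x ≤ hi) (hs : [lo, hi].Sublist p) :
    fInv p ≤ (p.length - 1).choose 2 := by
  obtain ⟨β, h, -, hp⟩ := sub_front hnd hlo hhi hs
  rw [h.inv, hp.length_eq, fInv, countP_zero (fun x hx => hlo x (hp.mem_iff.2 (by simp [hx])))]
  simpa using fInv_le β

theorem bound_hi {lo hi : ℕ} {p : List ℕ} (hnd : p.Nodup)
    (hlo : ∀ x ∈ p, lo ≤ x) (hhi : ∀ x ∈ p, x ≤ hi) (hs : [hi, lo].Sublist p) :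
    p.length - 1 ≤ fInv p := by
  have h := bound_lo (p := p.reverse) (lo := lo) (hi := hi) (by simpa using hnd)
    (by simpa using hlo) (by simpa using hhi) (by simpa using hs.reverse)
  have h2 := fInv_reverse p hnd
  rw [List.length_reverse] at h
  rcases hl : p.length with _ | r
  · omega
  · rw [hl, choose_two_succ] at h2
    rw [hl] at h
    simp at h ⊢
    omega

/-- Crossing between the two types of tails. -/
theorem cross {n : ℕ} (H : FClass n) (lo m hi : ℕ) (β β' : List ℕ) (hn : β.length = n)
    (hnd : (lo :: β).Nodup) (hlo : ∀ x ∈ β, lo < x) (hm : ∀ x ∈ β, m ≤ x) (hhi : ∀ x ∈ β, x ≤ hi)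
    (hlm : lo < m) (hmhi : m < hi)
    (hpq : β.Perm β') (h1 : [m, hi].Sublist β) (h2 : [hi, m].Sublist β')
    (hinv : fInv β = fInv β') : FEq (lo :: β) (lo :: β') := by
  have hnd1 := (List.nodup_cons.1 hnd).2
  have hb1 := bound_lo hnd1 hm hhi h1
  have hb2 := bound_hi (hpq.nodup_iff.1 hnd1) (fun x hx => hm x (hpq.mem_iff.2 hx))
    (fun x hx => hhi x (hpq.mem_iff.2 hx)) h2
  rw [← hinv, ← hpq.length_eq] at hb2
  have hmβ : m ∈ β := h1.subset (by simp)
  have hhβ : hi ∈ β := h1.subset (by simp)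
  -- letters other than m, hi
  obtain ⟨S, hS⟩ : ∃ S, β.Perm (m :: hi :: S) := by
    refine ⟨(β.erase m).erase hi, (List.perm_cons_erase hmβ).trans ?_⟩
    exact (List.perm_cons_erase ((List.mem_erase_of_ne hmhi.ne').2 hhβ)).cons m
  have hSn := hS.nodup_iff.1 hnd1
  have hlen := hS.length_eq
  simp only [List.length_cons] at hlen
  have hSne : S ≠ [] := by
    rintro rfl
    simp at hlen
    rw [hlen] at hb1 hb2
    simp at hb1; omega
  have hSnd : S.Nodup := (List.nodup_cons.1 (List.nodup_cons.1 hSn).2).2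
  obtain ⟨b, T, hT, hTb⟩ := exists_max S hSne hSnd
  have hTl := hT.length_eq
  simp only [List.length_cons] at hTl
  have hS2 : β.Perm (m :: hi :: b :: T) := hS.trans ((hT.cons hi).cons m)
  have hSn2 := hS2.nodup_iff.1 hnd1
  simp only [List.nodup_cons, List.mem_cons, not_or] at hSn2
  have hbm : m < b := lt_of_le_of_ne (hm b (hS2.mem_iff.2 (by simp))) hSn2.1.2.1
  have hbhi : b < hi := lt_of_le_of_ne (hhi b (hS2.mem_iff.2 (by simp))) (Ne.symm hSn2.2.1.1)
  set t := T.length with ht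
  have hβl : β.length - 1 = t + 2 := by omega
  rw [hβl] at hb1 hb2
  rw [choose_two_succ, choose_two_succ] at hb1
  set k := fInv β with hk
  obtain ⟨ρ, hρ, hρk⟩ := exists_inv (t + 1) (b :: T) (by simp [hSn2]) (by simp [ht]) (k - (t + 2))
    (by rw [choose_two_succ]; omega)
  obtain ⟨τ, hτ, hτk⟩ := exists_inv (t + 1) (hi :: T) (by simp [hSn2]) (by simp [ht]) (k - (t + 1))
    (by rw [choose_two_succ]; omega)
  have hmT : ∀ x ∈ T, m < x := fun x hx =>
    lt_of_le_of_ne (hm x (hS2.mem_iff.2 (by simp [hx]))) (by rintro rfl; exact hSn2.1.2.2 hx)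
  have hloT : ∀ x ∈ T, lo < x := fun x hx => hlm.trans (hmT x hx)
  have hτm : ∀ x ∈ τ, m < x := by
    intro x hx
    rcases List.mem_cons.1 (hτ.mem_iff.1 hx) with rfl | h
    · exact hmhi
    · exact hmT x h
  have hρm : ∀ x ∈ ρ, m < x := by
    intro x hx
    rcases List.mem_cons.1 (hρ.mem_iff.1 hx) with rfl | h
    · exact hbm
    · exact hmT x h
  have hρhi : ∀ x ∈ ρ, x < hi := by
    intro x hx
    rcases List.mem_cons.1 (hρ.mem_iff.1 hx) with rfl | h
    · exact hbhi
    · exact (hTb x h).trans hbhi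
  have hcτ : τ.countP (fun y => decide (y < b)) = t := by
    rw [hτ.countP_eq, List.countP_cons, countP_full hTb]
    simp [hbhi.le, ht]
  have hρl : ρ.length = t + 1 := by rw [hρ.length_eq]; simp [ht]
  -- permutations
  have p1 : β.Perm (b :: m :: τ) := by
    refine hS2.trans ?_
    refine List.Perm.trans ?_ (((hτ.symm).cons m).cons b)
    exact ((List.Perm.swap b hi T).cons m).trans (List.Perm.swap b m _)
  have p2 : β.Perm (hi :: m :: ρ) := by
    refine hS2.trans ?_
    refine List.Perm.trans ?_ (((hρ.symm).cons m).cons hi)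
    exact List.Perm.swap hi m _
  have p3 : (b :: τ).Perm (hi :: ρ) :=
    ((hτ.cons b).trans (List.Perm.swap hi b T)).trans (hρ.symm.cons hi)
  have hiτ : hi ∈ τ := hτ.mem_iff.2 (by simp)
  have e1 : FEq β (b :: m :: τ) := by
    refine H m hi _ _ hn hnd1 p1 hm hhi h1 ?_ ?_
    · exact ((List.singleton_sublist.2 hiτ).cons_cons m).cons b
    · rw [← hk, fInv, fInv, countP_zero (fun x hx => (hτm x hx).le), hτk, List.countP_cons, hcτ]
      simp [hbm]; omega
  have e2 : FEq (lo :: b :: m :: τ) (m :: lo :: b :: τ) :=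
    (FEq.step (FStep.A lo m b τ hlm hbm)).symm
  have hnd3 : (lo :: b :: τ).Nodup := by
    have := ((p1.trans (List.Perm.swap m b τ)).cons lo).nodup_iff.1 hnd
    simp only [List.nodup_cons, List.mem_cons, not_or] at this ⊢
    tauto
  have e3 : FEq (lo :: b :: τ) (lo :: hi :: ρ) := by
    refine H lo hi _ _ ?_ hnd3 (p3.cons lo) ?_ ?_ ?_ ?_ ?_
    · simp [hτ.length_eq]; omega
    · intro x hx
      rcases List.mem_cons.1 hx with rfl | hx
      · exact le_rfl
      · refine (hlo x (p1.mem_iff.2 ?_)).le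
        simp only [List.mem_cons] at hx ⊢; tauto
    · intro x hx
      rcases List.mem_cons.1 hx with rfl | hx
      · exact (hlm.trans hmhi).le
      · refine (hhi x (p1.mem_iff.2 ?_))
        simp only [List.mem_cons] at hx ⊢; tauto
    · exact ((List.singleton_sublist.2 hiτ).cons b).cons_cons lo
    · exact ((List.singleton_sublist.2 (List.mem_cons_self ..))).cons_cons lo
    · rw [fInv, fInv, fInv, fInv, hcτ, hτk, hρk, countP_full hρhi, hρl, countP_zero, countP_zero]
      · omega
      · intro x hx
        rcases List.mem_cons.1 hx with rfl | hx
        · exact (hlm.trans hmhi).le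
        · exact (hlm.trans (hρm x hx)).le
      · intro x hx
        rcases List.mem_cons.1 hx with rfl | hx
        · exact (hlm.trans hbm).le
        · exact (hlm.trans (hτm x hx)).le
  have e4 : FEq (m :: lo :: hi :: ρ) (lo :: hi :: m :: ρ) :=
    FEq.step (FStep.A lo m hi ρ hlm hmhi)
  have e5 : FEq (hi :: m :: ρ) β' := by
    refine H.rev m hi _ _ (by rw [← p2.length_eq, hn]) (p2.nodup_iff.1 hnd1) (p2.symm.trans hpq)
      (fun x hx => hm x (p2.mem_iff.2 hx)) (fun x hx => hhi x (p2.mem_iff.2 hx)) ?_ h2 ?_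
    · exact List.sublist_append_left [hi, m] ρ
    · rw [← hinv, fInv, fInv, countP_zero (fun x hx => (hρm x hx).le), hρk, List.countP_cons,
        countP_full hρhi, hρl]
      simp [hmhi]; omega
  exact ((((e1.cons lo).trans e2).trans (e3.cons m)).trans e4).trans (e5.cons lo)

theorem FClass_all (n : ℕ) : FClass n := by
  induction n with
  | zero =>
    intro lo hi p q hn _ _ _ _ hs
    have := hs.length_le; simp at this; omega
  | succ n H =>
    intro lo hi p q hn hnd hpq hlo hhi hp hq hinv
    have hndq := hpq.nodup_iff.1 hnd
    obtain ⟨β, e1, hβ, q1⟩ := sub_front hnd hlo hhi hp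
    obtain ⟨β', e2, hβ', q2⟩ := sub_front hndq (fun x hx => hlo x (hpq.mem_iff.2 hx))
      (fun x hx => hhi x (hpq.mem_iff.2 hx)) hq
    refine e1.trans (FEq.trans ?_ e2.symm)
    have pp : β.Perm β' := (List.perm_cons lo).1 (q1.symm.trans (hpq.trans q2))
    have hnd1 := q1.nodup_iff.1 hnd
    have hβnd := (List.nodup_cons.1 hnd1).2
    have hloβ : ∀ x ∈ β, lo < x := fun x hx =>
      lt_of_le_of_ne (hlo x (q1.mem_iff.2 (by simp [hx])))
        (by rintro rfl; exact (List.nodup_cons.1 hnd1).1 hx)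
    have hhiβ : ∀ x ∈ β, x ≤ hi := fun x hx => hhi x (q1.mem_iff.2 (by simp [hx]))
    have hi2 : fInv β = fInv β' := by
      have := (e1.inv.symm.trans hinv).trans e2.inv
      rwa [fInv, fInv, countP_zero (fun x hx => (hloβ x hx).le),
        countP_zero (fun x hx => (hloβ x (pp.mem_iff.2 hx)).le), zero_add, zero_add] at this
    have hl : β.length = n := by have := q1.length_eq; simp at this; omega
    obtain ⟨m, S, hS, hmS⟩ := exists_min β (List.ne_nil_of_mem hβ) hβnd
    have hmβ : m ∈ β := hS.mem_iff.2 (by simp)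
    have hm : ∀ x ∈ β, m ≤ x := by
      intro x hx
      rcases List.mem_cons.1 (hS.mem_iff.1 hx) with rfl | h
      · exact le_rfl
      · exact (hmS x h).le
    have hlm := hloβ m hmβ
    by_cases hmh : m = hi
    · subst hmh
      have : S = [] := by
        rw [List.eq_nil_iff_forall_not_mem]
        intro x hx
        have := hmS x hx
        have := hhiβ x (hS.mem_iff.2 (by simp [hx]))
        omega
      subst this
      rw [List.perm_singleton.1 hS, List.perm_singleton.1 (pp.symm.trans hS)]
      exact FEq.refl _
    · have hmhi : m < hi := lt_of_le_of_ne (hhiβ m hmβ) hmh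
      rcases pair_or hmβ hβ hmh with s1 | s1 <;>
        rcases pair_or (pp.mem_iff.1 hmβ) hβ' hmh with s2 | s2
      · exact (H m hi β β' hl hβnd pp hm hhiβ s1 s2 hi2).cons lo
      · exact cross H lo m hi β β' hl hnd1 hloβ hm hhiβ hlm hmhi pp s1 s2 hi2
      · refine (cross H lo m hi β' β (by rw [← pp.length_eq, hl]) ((pp.cons lo).nodup_iff.1 hnd1)
          (fun x hx => hloβ x (pp.mem_iff.2 hx)) (fun x hx => hm x (pp.mem_iff.2 hx))
          (fun x hx => hhiβ x (pp.mem_iff.2 hx)) hlm hmhi pp.symm s2 s1 hi2.symm).symm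
      · exact (H.rev m hi β β' hl hβnd pp hm hhiβ s1 s2 hi2).cons lo

/-- The word of positions of a permutation. -/
def wd {n : ℕ} (w : Equiv.Perm (Fin n)) : List ℕ := List.ofFn (fun v => (w.symm v : ℕ))

theorem wd_length {n : ℕ} (w : Equiv.Perm (Fin n)) : (wd w).length = n := by simp [wd]

theorem wd_get {n : ℕ} (w : Equiv.Perm (Fin n)) (v : Fin n) :
    (wd w)[(v : ℕ)]? = some (w.symm v : ℕ) := by
  simp [wd]

theorem wd_inj {n : ℕ} {w u : Equiv.Perm (Fin n)} (h : wd w = wd u) : w = u := by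
  have h1 := List.ofFn_injective h
  have : w.symm = u.symm := by
    ext v; exact congrFun h1 v
  simpa using congrArg Equiv.symm this

theorem countP_ofFn_sum {n : ℕ} (f : Fin n → ℕ) (a : ℕ) :
    (List.ofFn f).countP (fun y => decide (y < a)) = ∑ b, if f b < a then 1 else 0 := by
  induction n with
  | zero => simp
  | succ n ih =>
    rw [List.ofFn_succ, List.countP_cons, ih, Fin.sum_univ_succ]
    simp [add_comm]

theorem fInv_ofFn {n : ℕ} (f : Fin n → ℕ) :
    fInv (List.ofFn f) = ∑ a, ∑ b, if a < b ∧ f b < f a then 1 else 0 := by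
  induction n with
  | zero => simp [fInv]
  | succ n ih =>
    rw [List.ofFn_succ, fInv, ih, countP_ofFn_sum, Fin.sum_univ_succ]
    simp only [Fin.sum_univ_succ (n := n)]
    simp

theorem linv_eq {n : ℕ} (w : Equiv.Perm (Fin n)) : linv n w = fInv (wd w) := by
  rw [wd, fInv_ofFn, linv, Finset.card_filter, ← Fintype.sum_prod_type'
    (f := fun a b : Fin n => if a < b ∧ (w.symm b : ℕ) < (w.symm a : ℕ) then 1 else 0)]
  refine Fintype.sum_equiv ((Equiv.prodComm _ _).trans (Equiv.prodCongr w w)) _ _ ?_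
  rintro ⟨p, q⟩
  simp [and_comm]

theorem dtmove_spec {n : ℕ} (i : ℕ) (w : Equiv.Perm (Fin n)) (hi : 1 ≤ i ∧ i + 1 < n)
    (a b c : Fin n) (ha : (a : ℕ) + 1 = i) (hb : (b : ℕ) = i) (hc : (c : ℕ) = i + 1) :
    (∀ v, v ≠ a → v ≠ b → v ≠ c → (dtmove n i w).symm v = w.symm v) ∧
    ((((w.symm a < w.symm b ∧ w.symm b < w.symm c) ∨ (w.symm c < w.symm b ∧ w.symm b < w.symm a)) ∧
      dtmove n i w = w) ∨
    (((w.symm b < w.symm a ∧ w.symm a < w.symm c) ∨ (w.symm c < w.symm a ∧ w.symm a < w.symm b)) ∧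
      (dtmove n i w).symm a = w.symm b ∧ (dtmove n i w).symm b = w.symm c ∧
      (dtmove n i w).symm c = w.symm a) ∨
    (((w.symm a < w.symm c ∧ w.symm c < w.symm b) ∨ (w.symm b < w.symm c ∧ w.symm c < w.symm a)) ∧
      (dtmove n i w).symm a = w.symm c ∧ (dtmove n i w).symm b = w.symm a ∧
      (dtmove n i w).symm c = w.symm b)) := by
  have ea : (⟨i - 1, by omega⟩ : Fin n) = a := Fin.ext (by simp; omega)
  have eb : (⟨i, by omega⟩ : Fin n) = b := Fin.ext (by simp; omega)
  have ec : (⟨i + 1, by omega⟩ : Fin n) = c := Fin.ext (by simp; omega)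
  have hab : a ≠ b := by rintro rfl; omega
  have hac : a ≠ c := by rintro rfl; omega
  have hbc : b ≠ c := by rintro rfl; omega
  have hPab := w.symm.injective.ne hab
  have hPac := w.symm.injective.ne hac
  have hPbc := w.symm.injective.ne hbc
  have key : dtmove n i w = if (w.symm a < w.symm b ∧ w.symm b < w.symm c) ∨
        (w.symm c < w.symm b ∧ w.symm b < w.symm a) then w
      else if w.symm b < w.symm a ∧ w.symm b < w.symm c then
        (Equiv.swap b (if w.symm a < w.symm c then a else c) *
          Equiv.swap (if w.symm a < w.symm c then a else c)
            (if w.symm a < w.symm c then c else a)) * w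
      else
        (Equiv.swap (if w.symm a < w.symm c then a else c) b *
          Equiv.swap b (if w.symm a < w.symm c then c else a)) * w := by
    unfold dtmove
    rw [dif_pos hi]
    simp only [ea, eb, ec]
  have hs : ∀ (σ τ : Equiv.Perm (Fin n)) (v : Fin n), (σ * τ * w).symm v =
      w.symm (τ.symm (σ.symm v)) := fun _ _ _ => rfl
  rw [key]
  by_cases h1 : (w.symm a < w.symm b ∧ w.symm b < w.symm c) ∨
        (w.symm c < w.symm b ∧ w.symm b < w.symm a)
  · rw [if_pos h1]
    exact ⟨fun _ _ _ _ => rfl, Or.inl ⟨h1, rfl⟩⟩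
  · rw [if_neg h1]
    by_cases h3 : w.symm a < w.symm c <;>
    by_cases h2 : w.symm b < w.symm a ∧ w.symm b < w.symm c <;>
    first
    | rw [if_pos h2]
    | rw [if_neg h2]
    all_goals simp only [h3, if_true, if_false]
    all_goals simp only [hs, Equiv.symm_swap]
    all_goals refine ⟨fun v va vb vc => by
      simp [Equiv.swap_apply_of_ne_of_ne, va, vb, vc], ?_⟩
    · right; left
      refine ⟨by grind, ?_⟩
      simp [Equiv.swap_apply_def, hab, hac, hbc, hab.symm, hac.symm, hbc.symm]
    · right; right
      refine ⟨by grind, ?_⟩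
      simp [Equiv.swap_apply_def, hab, hac, hbc, hab.symm, hac.symm, hbc.symm]
    · right; right
      refine ⟨by grind, ?_⟩
      simp [Equiv.swap_apply_def, hab, hac, hbc, hab.symm, hac.symm, hbc.symm]
    · right; left
      refine ⟨by grind, ?_⟩
      simp [Equiv.swap_apply_def, hab, hac, hbc, hab.symm, hac.symm, hbc.symm]

/-- A word-level move at position `k`. -/
def FAt (k : ℕ) (p q : List ℕ) : Prop :=
  (∀ j, j ≠ k → j ≠ k + 1 → j ≠ k + 2 → p[j]? = q[j]?) ∧
  ∃ x y z, x < y ∧ y < z ∧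
    ((p[k]? = some y ∧ p[k+1]? = some x ∧ p[k+2]? = some z ∧
      q[k]? = some x ∧ q[k+1]? = some z ∧ q[k+2]? = some y) ∨
     (p[k]? = some z ∧ p[k+1]? = some x ∧ p[k+2]? = some y ∧
      q[k]? = some y ∧ q[k+1]? = some z ∧ q[k+2]? = some x))

theorem FStep.at {p q : List ℕ} (h : FStep p q) : ∃ k, FAt k p q := by
  induction h with
  | A x y z l h1 h2 =>
    refine ⟨0, ?_, x, y, z, h1, h2, Or.inl (by simp)⟩
    intro j _ _ _
    obtain ⟨j, rfl⟩ : ∃ t, j = t + 3 := ⟨j - 3, by omega⟩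
    simp
  | B x y z l h1 h2 =>
    refine ⟨0, ?_, x, y, z, h1, h2, Or.inr (by simp)⟩
    intro j _ _ _
    obtain ⟨j, rfl⟩ : ∃ t, j = t + 3 := ⟨j - 3, by omega⟩
    simp
  | cons a h ih =>
    obtain ⟨k, h1, x, y, z, hx, hy, h2⟩ := ih
    refine ⟨k + 1, ?_, x, y, z, hx, hy, by simpa using h2⟩
    intro j j1 j2 j3
    rcases j with _ | j
    · simp
    · simpa using h1 j (by omega) (by omega) (by omega)

theorem FAt.step {k : ℕ} {p q : List ℕ} (h : FAt k p q) : FStep p q := by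
  induction k generalizing p q with
  | zero =>
    obtain ⟨h1, x, y, z, hx, hy, h2⟩ := h
    match p, q with
    | [], _ => simp at h2
    | [_], _ => simp at h2
    | [_, _], _ => simp at h2
    | _, [] => simp at h2
    | _, [_] => simp at h2
    | _, [_, _] => simp at h2
    | a :: b :: c :: p, a' :: b' :: c' :: q =>
      have : p = q := by
        apply List.ext_getElem?
        intro j
        simpa using h1 (j + 3) (by omega) (by omega) (by omega)
      subst this
      simp at h2
      rcases h2 with ⟨rfl, rfl, rfl, rfl, rfl, rfl⟩ | ⟨rfl, rfl, rfl, rfl, rfl, rfl⟩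
      · exact FStep.A _ _ _ _ hx hy
      · exact FStep.B _ _ _ _ hx hy
  | succ k ih =>
    obtain ⟨h1, x, y, z, hx, hy, h2⟩ := h
    match p, q with
    | [], _ => simp at h2
    | _, [] => simp at h2
    | a :: p, a' :: q =>
      have h0 := h1 0 (by omega) (by omega) (by omega)
      simp at h0
      subst h0
      refine FStep.cons a (ih ⟨?_, x, y, z, hx, hy, by simpa using h2⟩)
      intro j j1 j2 j3
      simpa using h1 (j + 1) (by omega) (by omega) (by omega)

theorem wd_dtmove {n : ℕ} (i : ℕ) (w : Equiv.Perm (Fin n)) (hi : 1 ≤ i ∧ i + 1 < n) :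
    dtmove n i w = w ∨ FAt (i - 1) (wd w) (wd (dtmove n i w)) ∨
      FAt (i - 1) (wd (dtmove n i w)) (wd w) := by
  obtain ⟨k, rfl⟩ : ∃ k, i = k + 1 := ⟨i - 1, by omega⟩
  obtain ⟨h0, h⟩ := dtmove_spec (k + 1) w hi ⟨k, by omega⟩ ⟨k + 1, by omega⟩ ⟨k + 2, by omega⟩ rfl rfl rfl
  set u := dtmove n (k + 1) w
  have hj : ∀ j, j ≠ k → j ≠ k + 1 → j ≠ k + 2 → (wd w)[j]? = (wd u)[j]? := by
    intro j j1 j2 j3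
    by_cases hjn : j < n
    · rw [wd_get w ⟨j, hjn⟩, wd_get u ⟨j, hjn⟩, h0 ⟨j, hjn⟩ (by simpa using j1) (by simpa using j2)
        (by simpa using j3)]
    · rw [List.getElem?_eq_none (by rw [wd_length]; omega),
        List.getElem?_eq_none (by rw [wd_length]; omega)]
  have wa := wd_get w ⟨k, by omega⟩
  have wb := wd_get w ⟨k + 1, by omega⟩
  have wc := wd_get w ⟨k + 2, by omega⟩
  have ua := wd_get u ⟨k, by omega⟩
  have ub := wd_get u ⟨k + 1, by omega⟩
  have uc := wd_get u ⟨k + 2, by omega⟩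
  simp only [Nat.add_sub_cancel]
  have hj' := fun j j1 j2 j3 => (hj j j1 j2 j3).symm
  rcases h with ⟨-, h⟩ | ⟨⟨h1, h2⟩ | ⟨h1, h2⟩, ea, eb, ec⟩ | ⟨⟨h1, h2⟩ | ⟨h1, h2⟩, ea, eb, ec⟩
  · exact Or.inl h
  all_goals rw [ea] at ua; rw [eb] at ub; rw [ec] at uc
  · exact Or.inr (Or.inl ⟨hj, _, _, _, h1, h2, Or.inl ⟨wa, wb, wc, ua, ub, uc⟩⟩)
  · exact Or.inr (Or.inr ⟨hj', _, _, _, h1, h2, Or.inr ⟨ua, ub, uc, wa, wb, wc⟩⟩)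
  · exact Or.inr (Or.inr ⟨hj', _, _, _, h1, h2, Or.inl ⟨ua, ub, uc, wa, wb, wc⟩⟩)
  · exact Or.inr (Or.inl ⟨hj, _, _, _, h1, h2, Or.inr ⟨wa, wb, wc, ua, ub, uc⟩⟩)

theorem FAt.det {k : ℕ} {p q r : List ℕ} (h : FAt k p q ∨ FAt k q p) (h' : FAt k p r ∨ FAt k r p) :
    q = r := by
  apply List.ext_getElem?
  intro j
  by_cases hj : j ≠ k ∧ j ≠ k + 1 ∧ j ≠ k + 2
  · have e1 : p[j]? = q[j]? := by
      rcases h with h | h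
      · exact h.1 j hj.1 hj.2.1 hj.2.2
      · exact (h.1 j hj.1 hj.2.1 hj.2.2).symm
    have e2 : p[j]? = r[j]? := by
      rcases h' with h | h
      · exact h.1 j hj.1 hj.2.1 hj.2.2
      · exact (h.1 j hj.1 hj.2.1 hj.2.2).symm
    rw [← e1, e2]
  · have : q[k]? = r[k]? ∧ q[k+1]? = r[k+1]? ∧ q[k+2]? = r[k+2]? := by
      rcases h with ⟨-, x, y, z, hx, hy, h⟩ | ⟨-, x, y, z, hx, hy, h⟩ <;>
      rcases h' with ⟨-, x', y', z', hx', hy', h'⟩ | ⟨-, x', y', z', hx', hy', h'⟩ <;>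
      rcases h with ⟨a1, a2, a3, a4, a5, a6⟩ | ⟨a1, a2, a3, a4, a5, a6⟩ <;>
      rcases h' with ⟨b1, b2, b3, b4, b5, b6⟩ | ⟨b1, b2, b3, b4, b5, b6⟩ <;>
      simp_all <;> omega
    have hj : j = k ∨ j = k + 1 ∨ j = k + 2 := by omega
    rcases hj with rfl | rfl | rfl
    · exact this.1
    · exact this.2.1
    · exact this.2.2

theorem step_dtmove {n : ℕ} (w : Equiv.Perm (Fin n)) (q : List ℕ) (k : ℕ)
    (h : FAt k (wd w) q ∨ FAt k q (wd w)) :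
    ∃ i, (1 ≤ i ∧ i + 1 < n) ∧ q = wd (dtmove n i w) := by
  have hk : k + 2 < n := by
    have : (wd w)[k+2]? ≠ none := by
      rcases h with ⟨-, x, y, z, hx, hy, h⟩ | ⟨-, x, y, z, hx, hy, h⟩ <;>
      rcases h with ⟨a1, a2, a3, a4, a5, a6⟩ | ⟨a1, a2, a3, a4, a5, a6⟩ <;> simp [a3, a6]
    by_contra hc
    exact this (List.getElem?_eq_none (by rw [wd_length]; omega))
  refine ⟨k + 1, by omega, ?_⟩
  rcases wd_dtmove (k + 1) w (by omega) with h1 | h1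
  · exfalso
    obtain ⟨h0, h2⟩ := dtmove_spec (k + 1) w (by omega) ⟨k, by omega⟩ ⟨k + 1, by omega⟩
      ⟨k + 2, by omega⟩ rfl rfl rfl
    have wa := wd_get w ⟨k, by omega⟩
    have wb := wd_get w ⟨k + 1, by omega⟩
    have wc := wd_get w ⟨k + 2, by omega⟩
    have hne : w.symm ⟨k, by omega⟩ ≠ w.symm ⟨k + 1, by omega⟩ :=
      w.symm.injective.ne (by simp)
    rw [h1] at h2
    have h3 : (w.symm ⟨k, by omega⟩ < w.symm ⟨k + 1, by omega⟩ ∧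
        w.symm ⟨k + 1, by omega⟩ < w.symm ⟨k + 2, by omega⟩) ∨
        (w.symm ⟨k + 2, by omega⟩ < w.symm ⟨k + 1, by omega⟩ ∧
        w.symm ⟨k + 1, by omega⟩ < w.symm ⟨k, by omega⟩) := by
      rcases h2 with h2 | h2 | h2
      · exact h2.1
      · exact absurd h2.2.1 hne
      · exact absurd h2.2.2.1.symm hne
    simp only [Fin.lt_def] at h3
    simp only at wa wb wc
    rcases h with ⟨-, x, y, z, hx, hy, h⟩ | ⟨-, x, y, z, hx, hy, h⟩ <;>
      rcases h with ⟨a1, a2, a3, a4, a5, a6⟩ | ⟨a1, a2, a3, a4, a5, a6⟩ <;>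
      simp_all <;> omega
  · exact FAt.det h h1

theorem feq_moves {n : ℕ} {p q : List ℕ} (h : FEq p q) :
    (∀ w : Equiv.Perm (Fin n), p = wd w → ∃ l : List ℕ, (∀ i ∈ l, 1 ≤ i ∧ i + 1 < n) ∧
      q = wd (l.foldl (fun v i => dtmove n i v) w)) ∧
    (∀ w : Equiv.Perm (Fin n), q = wd w → ∃ l : List ℕ, (∀ i ∈ l, 1 ≤ i ∧ i + 1 < n) ∧
      p = wd (l.foldl (fun v i => dtmove n i v) w)) := by
  induction h with
  | rel p q h =>
    obtain ⟨k, h⟩ := h.at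
    constructor
    · rintro w rfl
      obtain ⟨i, hi, e⟩ := step_dtmove w q k (Or.inl h)
      exact ⟨[i], by simpa using hi, by simpa using e⟩
    · rintro w rfl
      obtain ⟨i, hi, e⟩ := step_dtmove w p k (Or.inr h)
      exact ⟨[i], by simpa using hi, by simpa using e⟩
  | refl p => exact ⟨fun w h => ⟨[], by simp, h⟩, fun w h => ⟨[], by simp, h⟩⟩
  | symm _ _ _ ih => exact ⟨ih.2, ih.1⟩
  | trans _ _ _ _ _ ih1 ih2 =>
    constructor
    · intro w hw
      obtain ⟨l, h1, h2⟩ := ih1.1 w hw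
      obtain ⟨l', h3, h4⟩ := ih2.1 _ h2
      refine ⟨l ++ l', ?_, by rw [List.foldl_append]; exact h4⟩
      intro i hi
      rcases List.mem_append.1 hi with hi | hi
      · exact h1 i hi
      · exact h3 i hi
    · intro w hw
      obtain ⟨l, h1, h2⟩ := ih2.2 w hw
      obtain ⟨l', h3, h4⟩ := ih1.2 _ h2
      refine ⟨l ++ l', ?_, by rw [List.foldl_append]; exact h4⟩
      intro i hi
      rcases List.mem_append.1 hi with hi | hi
      · exact h1 i hi
      · exact h3 i hi

theorem linv_dtmove {n : ℕ} (i : ℕ) (w : Equiv.Perm (Fin n)) (hi : 1 ≤ i ∧ i + 1 < n) :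
    linv n (dtmove n i w) = linv n w := by
  rw [linv_eq, linv_eq]
  rcases wd_dtmove i w hi with h | h | h
  · rw [h]
  · exact h.step.inv.symm
  · exact h.step.inv

theorem ends_dtmove {n : ℕ} (i : ℕ) (w : Equiv.Perm (Fin n)) (hi : 1 ≤ i ∧ i + 1 < n)
    (s t : Fin n) (hs : (s : ℕ) = 0) (ht : (t : ℕ) = n - 1) :
    (dtmove n i w t < dtmove n i w s ↔ w t < w s) := by
  obtain ⟨a, ha⟩ : ∃ a : Fin n, (a : ℕ) + 1 = i := ⟨⟨i - 1, by omega⟩, by simp; omega⟩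
  obtain ⟨b, hb⟩ : ∃ b : Fin n, (b : ℕ) = i := ⟨⟨i, by omega⟩, rfl⟩
  obtain ⟨c, hc⟩ : ∃ c : Fin n, (c : ℕ) = i + 1 := ⟨⟨i + 1, by omega⟩, rfl⟩
  obtain ⟨h0, h⟩ := dtmove_spec i w hi a b c ha hb hc
  set u := dtmove n i w
  have hx : ∀ (X Y Z x : Fin n), u (w.symm a) = X → u (w.symm b) = Y → u (w.symm c) = Z →
      ((x = w.symm a ∧ w x = a ∧ u x = X) ∨ (x = w.symm b ∧ w x = b ∧ u x = Y) ∨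
      (x = w.symm c ∧ w x = c ∧ u x = Z) ∨
      (u x = w x ∧ w x ≠ a ∧ w x ≠ b ∧ w x ≠ c)) := by
    intro X Y Z x hX hY hZ
    by_cases h1 : w x = a
    · left; rw [← hX, ← h1]; simp
    by_cases h2 : w x = b
    · right; left; rw [← hY, ← h2]; simp
    by_cases h3 : w x = c
    · right; right; left; rw [← hZ, ← h3]; simp
    right; right; right
    refine ⟨?_, h1, h2, h3⟩
    have := h0 (w x) h1 h2 h3
    rw [Equiv.symm_apply_apply, Equiv.symm_apply_eq] at this
    exact this.symm
  have hne : s ≠ t := by rintro rfl; omega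
  have hne' := w.injective.ne hne
  have ba := (w.symm a).isLt
  have bb := (w.symm b).isLt
  have bc := (w.symm c).isLt
  rcases h with ⟨-, h⟩ | ⟨h, ea, eb, ec⟩ | ⟨h, ea, eb, ec⟩
  · rw [h]
  · rw [Equiv.symm_apply_eq] at ea eb ec
    have hs' := hx c a b s ec.symm ea.symm eb.symm
    have ht' := hx c a b t ec.symm ea.symm eb.symm
    clear hx h0
    clear_value u
    simp only [Fin.lt_def, Fin.ext_iff, ne_eq] at *
    omega
  · rw [Equiv.symm_apply_eq] at ea eb ec
    have hs' := hx b c a s eb.symm ec.symm ea.symm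
    have ht' := hx b c a t eb.symm ec.symm ea.symm
    clear hx h0
    clear_value u
    simp only [Fin.lt_def, Fin.ext_iff, ne_eq] at *
    omega

theorem pair_sublist_ofFn {n : ℕ} (f : Fin n → ℕ) (i j : Fin n) (h : i < j) :
    [f i, f j].Sublist (List.ofFn f) := by
  induction n with
  | zero => exact i.elim0
  | succ n ih =>
    rw [List.ofFn_succ]
    obtain ⟨j, rfl⟩ := Fin.exists_succ_eq.2 (Fin.ne_zero_of_lt h)
    refine Fin.cases ?_ (fun i h => ?_) i h
    · intro _
      have hm : f j.succ ∈ List.ofFn (fun v : Fin n => f v.succ) := List.mem_ofFn.2 ⟨j, rfl⟩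
      exact (List.singleton_sublist.2 hm).cons_cons _
    · exact (ih (fun v => f v.succ) i j (by simpa using h)).cons _

theorem wd_nodup {n : ℕ} (w : Equiv.Perm (Fin n)) : (wd w).Nodup :=
  List.nodup_ofFn.2 (Fin.val_injective.comp w.symm.injective)

theorem wd_mem {n : ℕ} (w : Equiv.Perm (Fin n)) (x : ℕ) : x ∈ wd w ↔ x < n := by
  rw [wd, List.mem_ofFn]
  constructor
  · rintro ⟨v, rfl⟩; exact (w.symm v).isLt
  · intro h; exact ⟨w ⟨x, h⟩, by simp⟩

theorem wd_pair {n : ℕ} (w : Equiv.Perm (Fin n)) (s t : Fin n) (h : w s < w t) :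
    [(s : ℕ), (t : ℕ)].Sublist (wd w) := by
  unfold wd
  simpa using pair_sublist_ofFn (fun v => (w.symm v : ℕ)) (w s) (w t) h

/-- two permutations of `{1,…,n}` are connected by a sequence of
twisted dual equivalence moves `d̃_i` if and only if they have the same number
of inversions and the same truth value of `w₁ > w_n`. -/
theorem dtmove_classes (n : ℕ) (hn : 2 ≤ n) (w u : Equiv.Perm (Fin n)) :
    (∃ l : List ℕ, (∀ i ∈ l, 1 ≤ i ∧ i + 1 < n) ∧
        l.foldl (fun v i => dtmove n i v) w = u) ↔
      (linv n w = linv n u ∧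
        (w ⟨n - 1, by omega⟩ < w ⟨0, by omega⟩ ↔
          u ⟨n - 1, by omega⟩ < u ⟨0, by omega⟩)) := by
  constructor
  · rintro ⟨l, hl, rfl⟩
    induction l generalizing w with
    | nil => simp
    | cons i l ih =>
      have hi := hl i (by simp)
      have h := ih (dtmove n i w) (fun j hj => hl j (by simp [hj]))
      rw [linv_dtmove i w hi, ends_dtmove i w hi ⟨0, by omega⟩ ⟨n - 1, by omega⟩ rfl rfl] at h
      simpa using h
  · rintro ⟨h1, h2⟩
    have hne : (⟨0, by omega⟩ : Fin n) ≠ ⟨n - 1, by omega⟩ := by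
      intro h; simp at h; omega
    rw [linv_eq, linv_eq] at h1
    have hperm : (wd w).Perm (wd u) :=
      (List.perm_ext_iff_of_nodup (wd_nodup w) (wd_nodup u)).2 (fun x => by
        rw [wd_mem, wd_mem])
    have hF : FEq (wd w) (wd u) := by
      by_cases hw : w ⟨n - 1, by omega⟩ < w ⟨0, by omega⟩
      · exact (FClass_all n).rev 0 (n - 1) _ _ (wd_length w) (wd_nodup w) hperm (by simp)
          (fun x hx => by have := (wd_mem w x).1 hx; omega) (wd_pair w _ _ hw)
          (wd_pair u _ _ (h2.1 hw)) h1
      · have hu := fun h => hw (h2.2 h)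
        exact (FClass_all n) 0 (n - 1) _ _ (wd_length w) (wd_nodup w) hperm (by simp)
          (fun x hx => by have := (wd_mem w x).1 hx; omega)
          (wd_pair w _ _ (lt_of_le_of_ne (not_lt.1 hw) (w.injective.ne hne)))
          (wd_pair u _ _ (lt_of_le_of_ne (not_lt.1 hu) (u.injective.ne hne))) h1
    obtain ⟨l, hl, e⟩ := (feq_moves hF).1 w rfl
    exact ⟨l, hl, (wd_inj e).symm⟩
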